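/- Let (X,σ) be an infinite topologically mixing shift of finite type over a finite alphabet, let Aut(X,σ) be the group of all homeomorphisms of X commuting with σ, and let H be a subgroup of Aut(X,σ) of finite index. Then the natural action of H on X is chaotic almost minimal. -/

import Mathlib

/-!
The point is that a closed `H`-invariant proper subset `Y` is finite. Mixing and a power of `σX` in
`H` make `H` transitive, so `Y` has empty interior, and some block `g` occurs in no point of `Y`.
If `Y` is infinite, it has a point `y` without small periods. By an argument of Fine and Wilf type,
such a `y` has a long window without any period up to slightly more than half its length. Let `n` be
the index of `H` in the automorphism group. Changing only a bounded central part of the window,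
gluing produces `n` variants of `y` containing `g`, all with their leftmost occurrence of `g` at the
same position. Since `g` does not occur in `y`, and the window has no short periods, the `n + 1`
resulting blocks never overlap one another's central parts, so permuting them wherever they occur
defines an action of the symmetric group of degree `n + 1` by automorphisms of the shift. A point
stabilizer in this group has index `n + 1`, hence some permutation that acts by an element of `H`
moves the block of `y` itself. It creates `g` in a point of `Y`, a contradiction.
-/

open Set MeasureTheory

instance homeomorphGroup {X : Type*} [TopologicalSpace X] : Group (X ≃ₜ X) where
  mul f g := g.trans f
  one := Homeomorph.refl X
  inv f := f.symm
  mul_assoc f g h := Homeomorph.ext fun _ => rfl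
  one_mul f := Homeomorph.ext fun _ => rfl
  mul_one f := Homeomorph.ext fun _ => rfl
  inv_mul_cancel f := Homeomorph.ext fun x => f.symm_apply_apply x

def shiftHomeo (A : Type*) [TopologicalSpace A] : (ℤ → A) ≃ₜ (ℤ → A) where
  toFun x := fun n => x (n + 1)
  invFun x := fun n => x (n - 1)
  left_inv x := funext fun n => by simp
  right_inv x := funext fun n => by simp
  continuous_toFun := continuous_pi fun n => continuous_apply (n + 1)
  continuous_invFun := continuous_pi fun n => continuous_apply (n - 1)

def restrictHomeo {X : Type*} [TopologicalSpace X] (e : X ≃ₜ X) (s : Set X)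
    (h : ∀ x, x ∈ s ↔ e x ∈ s) : s ≃ₜ s where
  toEquiv := e.toEquiv.subtypeEquiv h
  continuous_toFun := by
    exact Continuous.subtype_mk (e.continuous.comp continuous_subtype_val) _
  continuous_invFun := by
    exact Continuous.subtype_mk (e.symm.continuous.comp continuous_subtype_val) _

def IsCAMZ {X : Type*} [TopologicalSpace X] (T : X ≃ₜ X) : Prop :=
  (∀ n : ℤ, n ≠ 0 → T ^ n ≠ 1) ∧
  (∀ U V : Set X, IsOpen U → IsOpen V → U.Nonempty → V.Nonempty →
      ∃ n : ℤ, ((T ^ n) '' U ∩ V).Nonempty) ∧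
  Dense {x : X | ∃ k : ℕ, 0 < k ∧ (T ^ k) x = x} ∧
  ∀ A : Set X, IsClosed A → T '' A = A → A ≠ Set.univ → A.Finite

def IsCAM {G X : Type*} [Group G] [TopologicalSpace X] (T : G →* (X ≃ₜ X)) : Prop :=
  Function.Injective T ∧
  (∀ U V : Set X, IsOpen U → IsOpen V → U.Nonempty → V.Nonempty →
      ∃ g : G, ((T g) '' U ∩ V).Nonempty) ∧
  Dense {x : X | (Set.range fun g : G => T g x).Finite} ∧
  ∀ A : Set X, IsClosed A → (∀ g : G, T g '' A = A) → A ≠ Set.univ → A.Finite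

/-- The word `w` occurs as a block somewhere in the bi-infinite sequence `x`. -/
def occursIn {A : Type*} (w : List A) (x : ℤ → A) : Prop :=
  ∃ k : ℤ, ∀ i : Fin w.length, x (k + (i.val : ℤ)) = w.get i

/-! ### Windows without short periods -/

section Periods

variable {A : Type*} {y : ℤ → A} {p q t i j : ℤ}

/-- The sequence `y` has period `t` on the closed interval `[i, j]`. -/
def HasPeriodOn (y : ℤ → A) (t i j : ℤ) : Prop :=
  ∀ k, i ≤ k → k + t ≤ j → y (k + t) = y k

namespace HasPeriodOn

lemma apply_eq (h : HasPeriodOn y t i j) {k l : ℤ} (hkl : l = k + t) (hk : i ≤ k) (hl : l ≤ j) :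
    y l = y k := by
  subst hkl
  exact h k hk hl

lemma mono (h : HasPeriodOn y t i j) {i' j' : ℤ} (hi : i ≤ i') (hj : j' ≤ j) :
    HasPeriodOn y t i' j' :=
  fun k hk hkj => h k (hi.trans hk) (hkj.trans hj)

lemma of_translate {s : ℤ} (h : HasPeriodOn (translate s y) t i j) :
    HasPeriodOn y t (i - s) (j - s) := fun k hk hkj => by
  simpa only [translate_apply, add_sub_cancel_right] using
    h.apply_eq (k := k + s) (l := k + t + s) (by ring) (by lia) (by lia)

lemma sub (hp : HasPeriodOn y p i j) (hq : HasPeriodOn y q i j) (hqp : q ≤ p) :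
    HasPeriodOn y (p - q) i (j - q) := fun k hk hkj =>
  calc y (k + (p - q)) = y (k + p) := (hq.apply_eq (by ring) (by lia) (by lia)).symm
    _ = y k := hp k hk (by lia)

lemma extend_right (hp : HasPeriodOn y p i j) (hq : HasPeriodOn y q i (j + 1)) (hp0 : 0 < p)
    (hq0 : 0 < q) (hpq : p + q ≤ j + 1 - i) : HasPeriodOn y p i (j + 1) := by
  intro k hk hkj
  rcases hkj.lt_or_eq with hlt | heq
  · exact hp k hk (by lia)
  · calc y (k + p) = y (k + p - q) := hq.apply_eq (by ring) (by lia) (by lia)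
      _ = y (k - q) := hp.apply_eq (by ring) (by lia) (by lia)
      _ = y k := (hq.apply_eq (by ring) (by lia) (by lia)).symm

lemma extend_left (hp : HasPeriodOn y p i j) (hq : HasPeriodOn y q (i - 1) j) (hp0 : 0 < p)
    (hq0 : 0 < q) (hpq : p + q ≤ j + 1 - i) : HasPeriodOn y p (i - 1) j := by
  intro k hk hkj
  rcases hk.lt_or_eq with hlt | heq
  · exact hp k (by lia) hkj
  · calc y (k + p) = y (k + p + q) := (hq.apply_eq rfl (by lia) (by lia)).symm
      _ = y (k + q) := hp.apply_eq (by ring) (by lia) (by lia)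
      _ = y k := hq.apply_eq rfl (by lia) (by lia)

lemma exists_maximal (h : HasPeriodOn y t i j) (hy : ¬ Function.Periodic y t) :
    ∃ i' ≤ i, ∃ j' ≥ j, HasPeriodOn y t i' j' ∧
      (¬ HasPeriodOn y t i' (j' + 1) ∨ ¬ HasPeriodOn y t (i' - 1) j') := by
  by_contra! hext
  have hall : ∀ n : ℕ, HasPeriodOn y t (i - n) (j + n) := by
    intro n
    induction n with
    | zero => simpa using h
    | succ n ih =>
      have hright := (hext _ (by lia) _ (by lia) ih).1
      have hboth := (hext _ (by lia) _ (by lia) hright).2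
      exact hboth.mono (by push_cast; lia) (by push_cast; lia)
  refine hy fun k => hall ((i - k).natAbs + (k + t - j).natAbs) k ?_ ?_ <;> lia

end HasPeriodOn

/-- If all windows longer than `N` have a period of at most about half their length, then extend
the run of period `p` as far as possible: the window including the position where the run breaks
has a short period `q`, and `p + q` is large because `p` does not extend. -/
lemma exists_second_period {N C a b : ℤ}
    (hshort : ∀ i j, N ≤ j - i → ∃ t, 0 < t ∧ 2 * t ≤ j - i + 2 * C ∧ HasPeriodOn y t i j)
    (hp : 0 < p) (hab : N ≤ b - a) (hper : HasPeriodOn y p a b) (hy : ¬ Function.Periodic y p) :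
    ∃ q i j, b - a ≤ j - i ∧ 2 * q ≤ j - i + 1 + 2 * C ∧ j - i + 1 < p + q ∧ q ≠ p ∧
      HasPeriodOn y p i j ∧ HasPeriodOn y q i j := by
  obtain ⟨i, hi, j, hj, hpij, hbreak | hbreak⟩ := hper.exists_maximal hy
  · obtain ⟨q, hq, hqC, hqij⟩ := hshort i (j + 1) (by lia)
    refine ⟨q, i, j, by lia, by lia, ?_, by rintro rfl; exact hbreak hqij, hpij,
      hqij.mono le_rfl (by lia)⟩
    by_contra! hle
    exact hbreak (hpij.extend_right hqij hp hq (by lia))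
  · obtain ⟨q, hq, hqC, hqij⟩ := hshort (i - 1) j (by lia)
    refine ⟨q, i, j, by lia, by lia, ?_, by rintro rfl; exact hbreak hqij, hpij,
      hqij.mono (by lia) le_rfl⟩
    by_contra! hle
    exact hbreak (hpij.extend_left hqij hp hq (by lia))

theorem exists_window_without_short_period (A : Type*) (N C : ℤ) :
    ∃ P : ℤ, ∀ y : ℤ → A, (∀ t, 0 < t → t ≤ P → ¬ Function.Periodic y t) →
      ∃ i j, N ≤ j - i ∧ ∀ t, 0 < t → 2 * t ≤ j - i + 2 * C → ¬ HasPeriodOn y t i j := by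
  set N' := max N (max 0 (10 * C + 10))
  refine ⟨10 * N', fun y hy => ?_⟩
  by_contra! hbad
  have hshort : ∀ i j, N' ≤ j - i → ∃ t, 0 < t ∧ 2 * t ≤ j - i + 2 * C ∧ HasPeriodOn y t i j :=
    fun i j hij => hbad i j (by lia)
  obtain ⟨p, hp, hpC, hper⟩ := hshort 0 (4 * N') (by lia)
  obtain ⟨q, i, j, hij, hqC, hpq, hne, hpij, hqij⟩ :=
    exists_second_period hshort hp (by lia) hper (hy p hp (by lia))
  -- Both `p` and `q` are about half the length of `[i, j]`, so their difference is a tiny period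
  -- of half of this window.
  obtain ⟨d, b, hd, hdC, hb, hdib⟩ :
      ∃ d b, 0 < d ∧ d ≤ 2 * C ∧ N' ≤ b - i ∧ HasPeriodOn y d i b := by
    rcases lt_or_gt_of_ne hne with hlt | hlt
    · exact ⟨p - q, j - q, by lia, by lia, by lia, hpij.sub hqij hlt.le⟩
    · exact ⟨q - p, j - p, by lia, by lia, by lia, hqij.sub hpij hlt.le⟩
  obtain ⟨q', i', j', hij', hqC', hdq', -⟩ :=
    exists_second_period hshort hd hb hdib (hy d hd (by lia))
  lia

end Periods

/-! ### Gluing and periodic points in shift spaces -/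

section ShiftSpaces

variable {A : Type*} {X : Set (ℤ → A)} {r M : ℕ}

/-- A set of sequences closed under all translations. -/
def ShiftInvariant (X : Set (ℤ → A)) : Prop :=
  ∀ x ∈ X, ∀ t : ℤ, translate t x ∈ X

/-- Membership in `X` is decided by the blocks of length `r`, as for the shifts of finite type. -/
def DeterminedByBlocks (X : Set (ℤ → A)) (r : ℕ) : Prop :=
  ∀ x, (∀ k : ℤ, ∃ y ∈ X, EqOn x y (Ico k (k + r))) → x ∈ X

/-- A left half of a point of `X` and a right half of another one can be completed to a point of
`X` across every gap of length at least `M`. -/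
def GluesAcross (X : Set (ℤ → A)) (M : ℕ) : Prop :=
  ∀ a ∈ X, ∀ b ∈ X, ∀ i j : ℤ, i + M ≤ j → ∃ x ∈ X, EqOn x a (Iio i) ∧ EqOn x b (Ici j)

lemma exists_determinedByBlocks {F : Set (List A)} (hF : F.Finite) :
    ∃ r, DeterminedByBlocks {x | ∀ w ∈ F, ¬ occursIn w x} r := by
  obtain ⟨r, hr⟩ := (hF.image List.length).bddAbove
  refine ⟨r, fun x hx w hw ⟨k, hk⟩ => ?_⟩
  obtain ⟨y, hy, hxy⟩ := hx k
  have hlen : w.length ≤ r := hr ⟨w, hw, rfl⟩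
  refine hy w hw ⟨k, fun i => ?_⟩
  have hi := i.isLt
  rw [← hxy ⟨by lia, by lia⟩, hk i]

lemma DeterminedByBlocks.mem_of_eqOn (hX : DeterminedByBlocks X r) {a b x : ℤ → A} {k : ℤ}
    (ha : a ∈ X) (hb : b ∈ X) (hxa : EqOn x a (Iio (k + r))) (hxb : EqOn x b (Ici k)) :
    x ∈ X := by
  refine hX x fun m => ?_
  rcases lt_or_ge m k with hm | hm
  · exact ⟨a, ha, hxa.mono fun n hn => hn.2.trans_le (by lia)⟩
  · exact ⟨b, hb, hxb.mono fun n hn => hm.trans hn.1⟩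

lemma GluesAcross.exists_middle (hM : GluesAcross X M) {a b c : ℤ → A} (ha : a ∈ X) (hb : b ∈ X)
    (hc : c ∈ X) {i j k l : ℤ} (hij : i + M ≤ j) (hjk : j ≤ k) (hkl : k + M ≤ l) :
    ∃ x ∈ X, EqOn x a (Iio i) ∧ EqOn x b (Ico j k) ∧ EqOn x c (Ici l) := by
  obtain ⟨y, hy, hya, hyb⟩ := hM a ha b hb i j hij
  obtain ⟨x, hx, hxy, hxc⟩ := hM y hy c hc k l hkl
  exact ⟨x, hx, fun n (hn : n < i) => (hxy (show n < k by lia)).trans (hya hn),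
    fun n hn => (hxy hn.2).trans (hyb hn.1), hxc⟩

lemma DeterminedByBlocks.periodize_mem (hX : DeterminedByBlocks X r) (hshift : ShiftInvariant X)
    {w : ℤ → A} (hw : w ∈ X) {q : ℤ} (hq : 0 < q) (hrq : r ≤ q)
    (hper : ∀ n ∈ Ico (0 : ℤ) r, w (n + q) = w n) : (fun n => w (n % q)) ∈ X := by
  refine hX _ fun k => ⟨translate (q * (k / q)) w, hshift w hw _, fun n hn => ?_⟩
  have hk := Int.emod_add_mul_ediv k q
  have hk0 := Int.emod_nonneg k hq.ne'
  have hkq := Int.emod_lt_of_pos k hq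
  obtain ⟨hn0, hnr⟩ := hn
  change w (n % q) = w (n - q * (k / q))
  rw [← Int.sub_mul_emod_self_left n q (k / q)]
  generalize q * (k / q) = m at *
  rcases lt_or_ge (n - m) q with hlt | hge
  · rw [Int.emod_eq_of_lt (by lia) hlt]
  · rw [← Int.sub_emod_right, Int.emod_eq_of_lt (by lia) (by lia),
      ← hper (n - m - q) ⟨by lia, by lia⟩, sub_add_cancel]

theorem GluesAcross.exists_periodic_eqOn (hM : GluesAcross X M) (hX : DeterminedByBlocks X r)
    (hshift : ShiftInvariant X) {x : ℤ → A} (hx : x ∈ X) (i j : ℤ) :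
    ∃ q : ℕ, 0 < q ∧ ∃ y ∈ X, Function.Periodic y (q : ℤ) ∧ EqOn y x (Ico i j) := by
  set L := (j - i).toNat + 1
  set q := L + r + M
  have hx' := hshift x hx (-i)
  obtain ⟨w, hw, hleft, hright⟩ := hM _ hx' _ (hshift _ hx' q) (L + r) q (by lia)
  have hper : ∀ n ∈ Ico (0 : ℤ) r, w (n + q) = w n := by
    rintro n ⟨hn0, hnr⟩
    rw [hright (show (q : ℤ) ≤ n + q by lia), hleft (show n < L + r by lia), translate_apply,
      add_sub_cancel_right]
  have hmem := hX.periodize_mem hshift hw (q := q) (by lia) (by lia) hper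
  refine ⟨q, by lia, _, hshift _ hmem i, fun n => ?_, fun n hn => ?_⟩
  · simp only [translate_apply, add_sub_right_comm, Int.add_emod_right]
  · obtain ⟨hin, hnj⟩ := hn
    change w ((n - i) % q) = x n
    rw [Int.emod_eq_of_lt (by lia) (by lia), hleft (show n - i < L + r by lia), translate_apply,
      sub_neg_eq_add, sub_add_cancel]

lemma finite_setOf_periodic [Finite A] {q : ℕ} (hq : 0 < q) :
    {y : ℤ → A | Function.Periodic y (q : ℤ)}.Finite := by
  have : NeZero q := ⟨hq.ne'⟩
  refine (finite_range fun (f : ZMod q → A) (n : ℤ) => f n).subset fun y hy => ?_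
  refine ⟨fun a => y (a.cast : ℤ), funext fun n => ?_⟩
  change y ((n : ZMod q).cast : ℤ) = y n
  rw [ZMod.coe_intCast, Int.emod_def, mul_comm, ← smul_eq_mul,
    Function.Periodic.sub_zsmul_eq hy]

end ShiftSpaces

/-! ### The shift map and its powers -/

section ShiftMap

/-- Topological mixing of a homeomorphism: the images of `U` eventually always meet `V`. -/
def IsTopMixing {Y : Type*} [TopologicalSpace Y] (σ : Y ≃ₜ Y) : Prop :=
  ∀ U V : Set Y, IsOpen U → IsOpen V → U.Nonempty → V.Nonempty →
    ∃ N : ℕ, ∀ n : ℕ, N ≤ n → ((σ ^ n) '' U ∩ V).Nonempty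

lemma IsTopMixing.exists_uniform {Y β : Type*} [TopologicalSpace Y] [Finite β] {σ : Y ≃ₜ Y}
    (hσ : IsTopMixing σ) {f : Y → β} (hf : ∀ b, IsOpen (f ⁻¹' {b})) :
    ∃ N : ℕ, ∀ a b, ∀ n : ℕ, N ≤ n → ∃ x, f x = f a ∧ f ((σ ^ n) x) = f b := by
  have hpair : ∀ u v : range f, ∃ N : ℕ, ∀ n : ℕ, N ≤ n → ∃ x, f x = u ∧ f ((σ ^ n) x) = v := by
    rintro ⟨_, a, rfl⟩ ⟨_, b, rfl⟩
    obtain ⟨N, hN⟩ := hσ _ _ (hf (f a)) (hf (f b)) ⟨a, rfl⟩ ⟨b, rfl⟩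
    refine ⟨N, fun n hn => ?_⟩
    obtain ⟨_, ⟨x, hxa, rfl⟩, hxb⟩ := hN n hn
    exact ⟨x, hxa, hxb⟩
  choose N hN using hpair
  obtain ⟨N₀, hN₀⟩ := Finite.exists_le fun p : range f × range f => N p.1 p.2
  exact ⟨N₀, fun a b n hn => hN ⟨f a, a, rfl⟩ ⟨f b, b, rfl⟩ n ((hN₀ (_, _)).trans hn)⟩

variable {A : Type*} [TopologicalSpace A] {X : Set (ℤ → A)} {σ : X ≃ₜ X} {r M : ℕ}

/-- The homeomorphism `σ` is the left shift by one on the set of sequences `X`. -/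
def IsShiftOn (σ : X ≃ₜ X) : Prop :=
  ∀ x : X, (σ x).1 = translate (-1) x.1

lemma isShiftOn_restrictHomeo (hX : ∀ x, x ∈ X ↔ shiftHomeo A x ∈ X) :
    IsShiftOn (restrictHomeo (shiftHomeo A) X hX) := fun x => funext fun n => by
  rw [translate_apply, sub_neg_eq_add]
  rfl

lemma exists_Ico_eqOn_imp_mem [DiscreteTopology A] {U : Set X} (hU : IsOpen U) {a : X}
    (ha : a ∈ U) : ∃ n : ℕ, ∀ x : X, EqOn x.1 a.1 (Ico (-n) n) → x ∈ U := by
  obtain ⟨V, hV, rfl⟩ := isOpen_induced_iff.1 hU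
  obtain ⟨I, u, hu, hsub⟩ := isOpen_pi_iff.1 hV a.1 ha
  refine ⟨I.sup Int.natAbs + 1, fun x hx => hsub fun k hk => ?_⟩
  have hkI : k.natAbs ≤ I.sup Int.natAbs := Finset.le_sup (f := Int.natAbs) hk
  rw [hx ⟨by lia, by lia⟩]
  exact (hu k hk).2

namespace IsShiftOn

lemma inv_apply (hσ : IsShiftOn σ) (x : X) : (σ⁻¹ x).1 = translate 1 x.1 := by
  have hx : x.1 = translate (-1) (σ⁻¹ x).1 := by
    rw [← hσ]
    exact congrArg Subtype.val (σ.apply_symm_apply x).symm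
  rw [hx, translate_translate, add_neg_cancel, translate_zero]

lemma zpow_apply (hσ : IsShiftOn σ) (k : ℤ) (x : X) : ((σ ^ k) x).1 = translate (-k) x.1 := by
  induction k with
  | zero => rw [zpow_zero, neg_zero, translate_zero]; rfl
  | succ k ih =>
    rw [add_comm, zpow_one_add, neg_add, translate_add, ← ih, ← hσ]
    rfl
  | pred k ih =>
    rw [sub_eq_add_neg, add_comm, zpow_add, zpow_neg_one, neg_add, neg_neg 1, translate_add, ← ih,
      ← hσ.inv_apply]
    rfl

lemma shiftInvariant (hσ : IsShiftOn σ) : ShiftInvariant X := fun x hx t => by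
  rw [← neg_neg t, ← hσ.zpow_apply (-t) ⟨x, hx⟩]
  exact Subtype.coe_prop _

lemma zpow_apply_eq_self_iff (hσ : IsShiftOn σ) {q : ℤ} {x : X} :
    (σ ^ q) x = x ↔ Function.Periodic x.1 q := by
  rw [← Subtype.coe_inj, hσ.zpow_apply, funext_iff]
  simp only [translate_apply, sub_neg_eq_add, Function.Periodic]

lemma finite_setOf_pow_apply_eq_self [Finite A] (hσ : IsShiftOn σ) {q : ℕ} (hq : 0 < q) :
    {x : X | (σ ^ q) x = x}.Finite := by
  refine Finite.of_injOn (f := Subtype.val) (fun x (hx : (σ ^ q) x = x) => ?_)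
    Subtype.val_injective.injOn (finite_setOf_periodic hq)
  exact hσ.zpow_apply_eq_self_iff.1 (by rwa [zpow_natCast])

variable [DiscreteTopology A]

theorem exists_gluesAcross [Finite A] (hσ : IsShiftOn σ) (hmix : IsTopMixing σ)
    (hX : DeterminedByBlocks X r) : ∃ M, GluesAcross X M := by
  have hcylinder : ∀ u, IsOpen ((fun x : X => (Ico (0 : ℤ) r).domRestrict x.1) ⁻¹' {u}) := fun u =>
    (isOpen_discrete {u}).preimage ((Pi.continuous_domRestrict _).comp continuous_subtype_val)
  obtain ⟨N, hN⟩ := hmix.exists_uniform hcylinder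
  refine ⟨N, fun a ha b hb i j hij => ?_⟩
  have hshift := hσ.shiftInvariant
  obtain ⟨w, hwa, hwb⟩ := hN ⟨_, hshift a ha (-(i - r))⟩ ⟨_, hshift b hb (-j)⟩
    (j - i + r).toNat (by lia)
  rw [← zpow_natCast, hσ.zpow_apply, domRestrict_eq_domRestrict_iff,
    Int.toNat_of_nonneg (by lia)] at hwb
  rw [domRestrict_eq_domRestrict_iff] at hwa
  -- `c` is a bridge from the block of `a` on `[i - r, i)` to the block of `b` on `[j, j + r)`.
  set c := translate (i - r) w.1
  have hc : c ∈ X := hshift _ w.2 _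
  have hca : ∀ n, i - r ≤ n → n < i → c n = a n := fun n hn hni => by
    have h := hwa (x := n - (i - r)) ⟨by lia, by lia⟩
    simp only [translate_apply, sub_neg_eq_add, sub_add_cancel] at h
    exact h
  have hcb : ∀ n, j ≤ n → n < j + r → c n = b n := fun n hn hnj => by
    have h := hwb (x := n - j) ⟨by lia, by lia⟩
    simp only [translate_apply, sub_neg_eq_add, sub_add_cancel] at h
    rw [← h]
    exact congrArg w.1 (by ring)
  let y := fun n => if n < i then a n else c n
  have hy : y ∈ X := hX.mem_of_eqOn (k := i - r) ha hc (fun n hn => by grind) fun n hn => by grind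
  refine ⟨fun n => if n < j then y n else b n,
    hX.mem_of_eqOn (k := j) hy hb (fun n hn => by grind) fun n hn => by grind,
    fun n hn => by grind, fun n hn => by grind⟩

theorem dense_setOf_pow_apply_eq_self (hσ : IsShiftOn σ) (hX : DeterminedByBlocks X r)
    (hM : GluesAcross X M) : Dense {x : X | ∃ q : ℕ, 0 < q ∧ (σ ^ q) x = x} := by
  refine dense_iff_inter_open.2 fun U hU ⟨a, ha⟩ => ?_
  obtain ⟨n, hn⟩ := exists_Ico_eqOn_imp_mem hU ha
  obtain ⟨q, hq, y, hy, hyq, hya⟩ := hM.exists_periodic_eqOn hX hσ.shiftInvariant a.2 (-n) n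
  exact ⟨⟨y, hy⟩, hn _ hya, q, hq, by
    rw [← zpow_natCast]; exact hσ.zpow_apply_eq_self_iff.2 hyq⟩

end IsShiftOn

end ShiftMap

/-! ### Permuting the blocks of a marker family -/

section Markers

variable {A ι : Type*}

/-- The block of `g` with shape `s` occurs in `x` at position `k`. -/
def OccursAt (g : ℤ → A) (s : Set ℤ) (x : ℤ → A) (k : ℤ) : Prop :=
  ∀ n ∈ s, x (k + n) = g n

lemma OccursAt.apply_eq {g x : ℤ → A} {s : Set ℤ} {k m : ℤ} (h : OccursAt g s x k)
    (hm : m - k ∈ s) : x m = g (m - k) := by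
  simpa only [add_sub_cancel] using h (m - k) hm

lemma occursAt_translate {g x : ℤ → A} {s : Set ℤ} {t k : ℤ} :
    OccursAt g s (translate t x) k ↔ OccursAt g s x (k - t) := by
  simp only [OccursAt, translate_apply, sub_add_eq_add_sub]

lemma occursAt_congr {g x x' : ℤ → A} {s : Set ℤ} {k : ℤ}
    (h : ∀ n ∈ s, x (k + n) = x' (k + n)) : OccursAt g s x k ↔ OccursAt g s x' k :=
  forall₂_congr fun n hn => by rw [h n hn]

/-- Sequences `xs i` that differ only on a core `C`, and whose blocks of shape `W ⊇ C` are
recognisable: the core of an occurrence of one of these blocks meets no other occurrence. -/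
structure IsMarkerFamily (xs : ι → ℤ → A) (C W : Set ℤ) : Prop where
  injective : Function.Injective xs
  core_subset : C ⊆ W
  eqOn_compl : ∀ i j, EqOn (xs i) (xs j) Cᶜ
  isolated : ∀ {x i j k k' n}, OccursAt (xs i) W x k → OccursAt (xs j) W x k' →
    n - k ∈ C → n - k' ∈ W → k = k'

open Classical in
/-- Replaces simultaneously every occurrence in `x` of the block `xs i` of shape `W` by the block
`xs (π i)`. For a marker family at most one occurrence affects each coordinate, so that the choice
in the definition is immaterial. -/
noncomputable def permuteBlocks (xs : ι → ℤ → A) (C W : Set ℤ) (π : Equiv.Perm ι) (x : ℤ → A) :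
    ℤ → A := fun n =>
  if h : ∃ q : ℤ × ι, OccursAt (xs q.2) W x q.1 ∧ n - q.1 ∈ C then
    xs (π h.choose.2) (n - h.choose.1)
  else x n

lemma permuteBlocks_of_forall_notMem {xs : ι → ℤ → A} {C W : Set ℤ} {π : Equiv.Perm ι}
    {x : ℤ → A} {n : ℤ} (h : ∀ k i, OccursAt (xs i) W x k → n - k ∉ C) :
    permuteBlocks xs C W π x n = x n :=
  dif_neg fun ⟨_, hq, hn⟩ => h _ _ hq hn

namespace IsMarkerFamily

variable {xs : ι → ℤ → A} {C W : Set ℤ} {x : ℤ → A} {k n : ℤ} {i j : ι}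

lemma index_unique (h : IsMarkerFamily xs C W) (hi : OccursAt (xs i) W x k)
    (hj : OccursAt (xs j) W x k) : i = j := by
  refine h.injective (funext fun n => ?_)
  by_cases hn : n ∈ C
  · rw [← hi n (h.core_subset hn), ← hj n (h.core_subset hn)]
  · exact h.eqOn_compl i j hn

lemma permuteBlocks_of_mem (h : IsMarkerFamily xs C W) (π : Equiv.Perm ι)
    (hi : OccursAt (xs i) W x k) (hn : n - k ∈ C) :
    permuteBlocks xs C W π x n = xs (π i) (n - k) := by
  have hex : ∃ q : ℤ × ι, OccursAt (xs q.2) W x q.1 ∧ n - q.1 ∈ C := ⟨(k, i), hi, hn⟩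
  obtain ⟨hocc, hmem⟩ := hex.choose_spec
  have hk : hex.choose.1 = k := h.isolated hocc hi hmem (h.core_subset hn)
  have hi' : hex.choose.2 = i := h.index_unique (hk ▸ hocc) hi
  rw [permuteBlocks, dif_pos hex, hk, hi']

lemma occursAt_permuteBlocks (h : IsMarkerFamily xs C W) (π : Equiv.Perm ι)
    (hi : OccursAt (xs i) W x k) : OccursAt (xs (π i)) W (permuteBlocks xs C W π x) k := by
  intro n hn
  by_cases hnC : n ∈ C
  · simpa only [add_sub_cancel_left] using
      h.permuteBlocks_of_mem (n := k + n) π hi (by simpa only [add_sub_cancel_left] using hnC)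
  · rw [permuteBlocks_of_forall_notMem, hi n hn]
    · exact h.eqOn_compl _ _ hnC
    · intro k' i' hi' hmem
      obtain rfl := h.isolated hi' hi hmem (by simpa only [add_sub_cancel_left] using hn)
      exact hnC (by simpa only [add_sub_cancel_left] using hmem)

lemma exists_occursAt_of_permuteBlocks (h : IsMarkerFamily xs C W) (π : Equiv.Perm ι)
    (hi : OccursAt (xs i) W (permuteBlocks xs C W π x) k) : ∃ j, OccursAt (xs j) W x k := by
  by_contra! hnone
  refine hnone i fun n hn => ?_
  rw [← hi n hn, permuteBlocks_of_forall_notMem]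
  intro k' j hj hmem
  obtain rfl := h.isolated (h.occursAt_permuteBlocks π hj) hi hmem
    (by simpa only [add_sub_cancel_left] using hn)
  exact hnone j hj

lemma permuteBlocks_mul (h : IsMarkerFamily xs C W) (π ρ : Equiv.Perm ι) (x : ℤ → A) :
    permuteBlocks xs C W (π * ρ) x = permuteBlocks xs C W π (permuteBlocks xs C W ρ x) := by
  funext n
  by_cases hn : ∃ k i, OccursAt (xs i) W x k ∧ n - k ∈ C
  · obtain ⟨k, i, hi, hmem⟩ := hn
    rw [h.permuteBlocks_of_mem _ hi hmem,
      h.permuteBlocks_of_mem _ (h.occursAt_permuteBlocks ρ hi) hmem, Equiv.Perm.mul_apply]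
  · push Not at hn
    rw [permuteBlocks_of_forall_notMem hn, permuteBlocks_of_forall_notMem,
      permuteBlocks_of_forall_notMem hn]
    intro k i hi
    obtain ⟨j, hj⟩ := h.exists_occursAt_of_permuteBlocks ρ hi
    exact hn k j hj

lemma permuteBlocks_one (h : IsMarkerFamily xs C W) (x : ℤ → A) :
    permuteBlocks xs C W 1 x = x := by
  funext n
  by_cases hn : ∃ k i, OccursAt (xs i) W x k ∧ n - k ∈ C
  · obtain ⟨k, i, hi, hmem⟩ := hn
    rw [h.permuteBlocks_of_mem _ hi hmem, hi.apply_eq (h.core_subset hmem), Equiv.Perm.one_apply]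
  · push Not at hn
    exact permuteBlocks_of_forall_notMem hn

lemma permuteBlocks_translate (h : IsMarkerFamily xs C W) (π : Equiv.Perm ι) (t : ℤ)
    (x : ℤ → A) :
    permuteBlocks xs C W π (translate t x) = translate t (permuteBlocks xs C W π x) := by
  funext n
  rw [translate_apply]
  by_cases hn : ∃ k i, OccursAt (xs i) W x k ∧ n - t - k ∈ C
  · obtain ⟨k, i, hi, hmem⟩ := hn
    have hocc : OccursAt (xs i) W (translate t x) (k + t) :=
      occursAt_translate.2 (by rwa [add_sub_cancel_right])
    rw [h.permuteBlocks_of_mem π hi hmem,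
      h.permuteBlocks_of_mem π hocc (by rwa [sub_add_eq_sub_sub_swap]), sub_add_eq_sub_sub_swap]
  · push Not at hn
    rw [permuteBlocks_of_forall_notMem hn, permuteBlocks_of_forall_notMem, translate_apply]
    intro k i hi
    simpa only [sub_sub_sub_cancel_right] using hn (k - t) i (occursAt_translate.1 hi)

lemma permuteBlocks_congr (h : IsMarkerFamily xs C W) (π : Equiv.Perm ι) {x x' : ℤ → A}
    (hn : x n = x' n) (hx : ∀ k, n - k ∈ C → ∀ m ∈ W, x (k + m) = x' (k + m)) :
    permuteBlocks xs C W π x n = permuteBlocks xs C W π x' n := by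
  by_cases hocc : ∃ k i, OccursAt (xs i) W x k ∧ n - k ∈ C
  · obtain ⟨k, i, hi, hmem⟩ := hocc
    rw [h.permuteBlocks_of_mem π hi hmem,
      h.permuteBlocks_of_mem π ((occursAt_congr (hx k hmem)).1 hi) hmem]
  · push Not at hocc
    rw [permuteBlocks_of_forall_notMem hocc, permuteBlocks_of_forall_notMem, hn]
    exact fun k i hi hmem => hocc k i ((occursAt_congr (hx k hmem)).2 hi) hmem

lemma continuous_permuteBlocks [TopologicalSpace A] [DiscreteTopology A]
    (h : IsMarkerFamily xs C W) (hW : W.Finite) (π : Equiv.Perm ι) :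
    Continuous (permuteBlocks xs C W π) := by
  refine continuous_pi fun n => continuous_iff_continuousAt.2 fun x => ?_
  have hcoord : ∀ m, ∀ᶠ x' in nhds x, x' m = x m := fun m =>
    (continuous_apply m).continuousAt.eventually_mem (isOpen_discrete {x m} |>.mem_nhds rfl)
  have hwindow : ∀ᶠ x' in nhds x, ∀ c ∈ C, ∀ m ∈ W, x' (n - c + m) = x (n - c + m) :=
    (hW.subset h.core_subset).eventually_all.2 fun c _ => hW.eventually_all.2 fun m _ => hcoord _
  refine (tendsto_const_nhds (x := permuteBlocks xs C W π x n)).congr' ?_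
  filter_upwards [hcoord n, hwindow] with x' hn hx'
  refine (h.permuteBlocks_congr π hn fun k hk m hm => ?_).symm
  simpa only [sub_sub_cancel] using hx' (n - k) hk m hm

/-- The action of the symmetric group on the indices of a marker family by automorphisms of a
set of sequences that is stable under all replacements. -/
noncomputable def autHom [TopologicalSpace A] [DiscreteTopology A] {X : Set (ℤ → A)}
    (h : IsMarkerFamily xs C W) (hW : W.Finite)
    (hX : ∀ π, MapsTo (permuteBlocks xs C W π) X X) : Equiv.Perm ι →* (X ≃ₜ X) where
  toFun π :=
    { toFun := (hX π).restrict
      invFun := (hX π⁻¹).restrict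
      left_inv := fun x => Subtype.ext <| by
        simp only [MapsTo.val_restrict_apply, ← h.permuteBlocks_mul, inv_mul_cancel,
          h.permuteBlocks_one]
      right_inv := fun x => Subtype.ext <| by
        simp only [MapsTo.val_restrict_apply, ← h.permuteBlocks_mul, mul_inv_cancel,
          h.permuteBlocks_one]
      continuous_toFun := (h.continuous_permuteBlocks hW π).restrict (hX π)
      continuous_invFun := (h.continuous_permuteBlocks hW π⁻¹).restrict (hX π⁻¹) }
  map_one' := Homeomorph.ext fun x => Subtype.ext (h.permuteBlocks_one x.1)
  map_mul' π ρ := Homeomorph.ext fun x => Subtype.ext (h.permuteBlocks_mul π ρ x.1)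

end IsMarkerFamily

end Markers

/-! ### Construction of marker families -/

section MarkerConstruction

variable {A κ : Type*} {X : Set (ℤ → A)} {g y z : ℤ → A} {r l M : ℕ}

lemma IsMarkerFamily.mapsTo_permuteBlocks {ι : Type*} {xs : ι → ℤ → A} {C W : Set ℤ}
    (h : IsMarkerFamily xs C W) (hX : DeterminedByBlocks X r) (hshift : ShiftInvariant X)
    (hmem : ∀ i, xs i ∈ X) (hmargin : ∀ n ∈ C, ∀ m, m - n < r → n - m < r → m ∈ W)
    (π : Equiv.Perm ι) : MapsTo (permuteBlocks xs C W π) X X := by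
  refine fun x hx => hX _ fun a => ?_
  by_cases hmeet : ∃ n ∈ Ico a (a + r), ∃ k i, OccursAt (xs i) W x k ∧ n - k ∈ C
  · obtain ⟨n, ⟨han, hnr⟩, k, i, hi, hn⟩ := hmeet
    refine ⟨translate k (xs (π i)), hshift _ (hmem _) k, fun m ⟨ham, hmr⟩ => ?_⟩
    exact (h.occursAt_permuteBlocks π hi).apply_eq (hmargin _ hn _ (by lia) (by lia))
  · push Not at hmeet
    exact ⟨x, hx, fun n hn => permuteBlocks_of_forall_notMem (hmeet n hn)⟩

lemma exists_separated_family (hshift : ShiftInvariant X) (hinf : X.Infinite)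
    (κ : Type*) [Finite κ] :
    ∃ h : ℕ, ∀ e : ℤ, ∃ q : κ → ℤ → A,
      (∀ i, q i ∈ X) ∧ ∀ i j, EqOn (q i) (q j) (Ico e (e + h)) → i = j := by
  have := hinf.to_subtype
  obtain ⟨q⟩ : Nonempty (κ ↪ X) :=
    ⟨(Finite.equivFin κ).toEmbedding.trans (Fin.valEmbedding.trans (Infinite.natEmbedding X))⟩
  have hpair : ∀ p : κ × κ, ∃ h : ℕ, EqOn (q p.1).1 (q p.2).1 (Ico (-h) h) → p.1 = p.2 := by
    rintro ⟨i, j⟩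
    by_contra! hne
    refine (hne 0).2 (q.injective (Subtype.ext (funext fun k => ?_)))
    exact (hne (k.natAbs + 1)).1 ⟨by lia, by lia⟩
  choose h hsep using hpair
  obtain ⟨h₀, hh₀⟩ := Finite.exists_le h
  refine ⟨2 * h₀, fun e => ⟨fun i => translate (e + h₀) (q i).1,
    fun i => hshift _ (q i).2 _, fun i j hij => hsep (i, j) fun n hn => ?_⟩⟩
  have hle := hh₀ (i, j)
  obtain ⟨hn, hnh⟩ := hn
  simpa only [translate_apply, add_sub_cancel_right] using
    hij (x := n + (e + h₀)) ⟨by lia, by lia⟩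

/-- Points `x i` of `X` that agree with `z` outside `[-c, c]` and whose leftmost occurrences of
the block `g` of length `l` are all at the same position `l₀`, inside `[-c, c]`. -/
structure IsVariantFamily (X : Set (ℤ → A)) (z g : ℤ → A) (l : ℕ) (c l₀ : ℤ)
    (x : κ → ℤ → A) : Prop where
  mem : ∀ i, x i ∈ X
  injective : Function.Injective x
  eqOn_compl : ∀ i, EqOn (x i) z (Icc (-c) c)ᶜ
  le_first : -c ≤ l₀
  first_le : l₀ + l ≤ c
  isLeast : ∀ i, IsLeast {k | OccursAt g (Ico 0 l) (x i) k} l₀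

/-- Each variant follows `z`, then the block `g`, then one of finitely many separated points of
`X`, then `z` again. The part `ζ` up to the end of `g` is shared, so that the leftmost occurrence
of `g` is too. -/
theorem GluesAcross.exists_isVariantFamily [Finite κ] (hM : GluesAcross X M)
    (hshift : ShiftInvariant X) (hinf : X.Infinite) (hg : g ∈ X) :
    ∃ c : ℤ, 0 ≤ c ∧ ∀ z ∈ X, (∀ k, ¬ OccursAt g (Ico 0 l) z k) →
      ∃ l₀, ∃ x : κ → ℤ → A, IsVariantFamily X z g l c l₀ x := by
  obtain ⟨h, hq⟩ := exists_separated_family hshift hinf κ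
  set c : ℤ := 3 * M + l + h
  refine ⟨c + l, by lia, fun z hz hzg => ?_⟩
  set s := -c + M
  obtain ⟨q, hqX, hqsep⟩ := hq (s + l + M)
  obtain ⟨ζ, hζ, hζz, hζg⟩ := hM z hz _ (hshift g hg s) (-c) s le_rfl
  have hζs : OccursAt g (Ico 0 l) ζ s := fun n ⟨hn, _⟩ => by
    rw [hζg (show s ≤ s + n by lia), translate_apply, add_sub_cancel_left]
  have hlow : ∀ k, OccursAt g (Ico 0 l) ζ k → -c - l ≤ k := fun k hk => by
    by_contra! hlt
    exact hzg k fun n ⟨hn, hnl⟩ => (hζz (show k + n < -c by lia)).symm.trans (hk n ⟨hn, hnl⟩)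
  obtain ⟨l₀, hl₀, hmin⟩ := Int.exists_least_of_bdd (P := OccursAt g (Ico 0 l) ζ) ⟨_, hlow⟩ ⟨s, hζs⟩
  have hl₀s := hmin s hζs
  have hl₀c := hlow l₀ hl₀
  choose x hxX hxζ hxq hxz using fun i => hM.exists_middle hζ (hqX i) hz (i := s + l)
    (j := s + l + M) (k := s + l + M + h) (l := c) le_rfl (by lia) (by lia)
  have hocc : ∀ i, ∀ k ≤ l₀, OccursAt g (Ico 0 l) (x i) k ↔ OccursAt g (Ico 0 l) ζ k :=
    fun i k hk => occursAt_congr fun n ⟨_, hn⟩ => hxζ i (show k + n < s + l by lia)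
  refine ⟨l₀, x, hxX, fun i j hij => ?_, fun i n hn => ?_, by lia, by lia,
    fun i => ⟨(hocc i l₀ le_rfl).2 hl₀, fun k hk => ?_⟩⟩
  · exact hqsep i j ((hxq i).symm.trans (hij ▸ hxq j))
  · rcases lt_or_ge n (-c) with hlt | hge
    · rw [hxζ i (show n < s + l by lia), hζz hlt]
    · exact hxz i (by grind)
  · by_contra! hlt
    exact hlt.not_ge (hmin k ((hocc i k hlt.le).1 hk))

namespace IsVariantFamily

variable {x : κ → ℤ → A} {c l₀ K : ℤ}

lemma elim_injective (h : IsVariantFamily X z g l c l₀ x)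
    (hz : ∀ k, ¬ OccursAt g (Ico 0 l) z k) :
    Function.Injective fun a : Option κ => a.elim z x := by
  have hne : ∀ i, x i ≠ z := fun i hi => hz l₀ (hi ▸ (h.isLeast i).1)
  rintro (_ | i) (_ | j) hij
  · rfl
  · exact (hne j hij.symm).elim
  · exact (hne i hij).elim
  · exact congrArg some (h.injective hij)

lemma elim_apply_of_notMem (h : IsVariantFamily X z g l c l₀ x) (a : Option κ) {n : ℤ}
    (hn : n ∉ Icc (-c) c) : a.elim z x n = z n := by
  cases a with
  | none => rfl
  | some i => exact h.eqOn_compl i hn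

/-- Overlaps of the original `z` with itself are excluded by its lack of short periods, all others
by comparing leftmost occurrences of `g`. -/
lemma not_overlap (h : IsVariantFamily X z g l c l₀ x) (hz : ∀ k, ¬ OccursAt g (Ico 0 l) z k)
    (hper : ∀ t, 0 < t → t ≤ K + 3 * c → ¬ HasPeriodOn z t (-K) K) {a b : Option κ} {t : ℤ}
    (ht : 0 < t) (htK : t ≤ K + 3 * c) :
    ¬ ∀ m, t - (K + 2 * c) ≤ m → m ≤ K + 2 * c → a.elim z x m = b.elim z x (m - t) := by
  intro hab
  rcases lt_or_ge (K + c) t with hfar | hnear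
  -- The core `[-c, c]` of each of the two lies outside the window `[-K, K]` of the other.
  · refine hper t ht htK fun m hm hmt => ?_
    rw [← h.elim_apply_of_notMem a (by grind), ← h.elim_apply_of_notMem b (by grind),
      hab _ (by lia) (by lia), add_sub_cancel_right]
  have hc := h.le_first
  have hc' := h.first_le
  have hleft : OccursAt g (Ico 0 l) (a.elim z x) l₀ →
      OccursAt g (Ico 0 l) (b.elim z x) (l₀ - t) := fun hocc n ⟨hn, hnl⟩ => by
    rw [← hocc n ⟨hn, hnl⟩, hab (l₀ + n) (by lia) (by lia), add_sub_right_comm]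
  have hright : OccursAt g (Ico 0 l) (b.elim z x) l₀ →
      OccursAt g (Ico 0 l) (a.elim z x) (l₀ + t) := fun hocc n ⟨hn, hnl⟩ => by
    rw [← hocc n ⟨hn, hnl⟩, hab (l₀ + t + n) (by lia) (by lia), add_right_comm,
      add_sub_cancel_right]
  rcases a with _ | i <;> rcases b with _ | j
  · refine hper t ht htK fun m hm hmt => ?_
    have hmt' := hab (m + t) (by lia) (by lia)
    rw [add_sub_cancel_right] at hmt'
    exact hmt'
  · exact hz _ (hright (h.isLeast j).1)
  · exact hz _ (hleft (h.isLeast i).1)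
  · have := (h.isLeast j).2 (hleft (h.isLeast i).1)
    lia

lemma isMarkerFamily (h : IsVariantFamily X z g l c l₀ x) (hz : ∀ k, ¬ OccursAt g (Ico 0 l) z k)
    (hK : 0 ≤ K) (hper : ∀ t, 0 < t → t ≤ K + 3 * c → ¬ HasPeriodOn z t (-K) K) :
    IsMarkerFamily (fun a : Option κ => a.elim z x) (Icc (-c) c)
      (Icc (-(K + 2 * c)) (K + 2 * c)) where
  injective := h.elim_injective hz
  core_subset := fun n hn => by grind
  eqOn_compl a b n hn := by
    simp only [h.elim_apply_of_notMem _ hn]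
  isolated {w a b k k' n} ha hb hn hn' := by
    have hlt : ∀ {a b : Option κ} {k k' : ℤ},
        OccursAt (a.elim z x) (Icc (-(K + 2 * c)) (K + 2 * c)) w k →
        OccursAt (b.elim z x) (Icc (-(K + 2 * c)) (K + 2 * c)) w k' →
        k' - k ≤ K + 3 * c → k' ≤ k := fun {a b k k'} ha hb hkk' => by
      by_contra! hlt
      refine h.not_overlap hz hper (a := a) (b := b) (sub_pos.2 hlt) hkk' fun m hm hmK => ?_
      rw [← ha m ⟨by lia, hmK⟩, ← hb (m - (k' - k)) ⟨by lia, by lia⟩]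
      exact congrArg w (by ring)
    have hn1 := hn.1
    exact le_antisymm (hlt hb ha (by grind)) (hlt ha hb (by grind))

lemma exists_occursAt_permuteBlocks (h : IsVariantFamily X z g l c l₀ x)
    {W : Set ℤ} (hmarker : IsMarkerFamily (fun a : Option κ => a.elim z x) (Icc (-c) c) W)
    {k : ℤ} (hk : OccursAt z W y k) {π : Equiv.Perm (Option κ)} (hπ : π none ≠ none) :
    ∃ k', OccursAt g (Ico 0 l) (permuteBlocks (fun a => a.elim z x) (Icc (-c) c) W π y) k' := by
  obtain ⟨i, hi⟩ := Option.ne_none_iff_exists'.1 hπ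
  have hcore := hmarker.core_subset
  have hc := h.le_first
  have hc' := h.first_le
  have hocc := hmarker.occursAt_permuteBlocks π (i := none) hk
  rw [hi] at hocc
  refine ⟨k + l₀, fun n ⟨hn, hnl⟩ => ?_⟩
  rw [add_assoc, hocc _ (hcore ⟨by lia, by lia⟩)]
  exact (h.isLeast i).1 n ⟨hn, hnl⟩

end IsVariantFamily

/-- The automorphisms permute blocks of variants of `y` around the centre of a window without
short periods. -/
theorem exists_perm_hom_occursAt [TopologicalSpace A] [DiscreteTopology A]
    (hX : DeterminedByBlocks X r) (hM : GluesAcross X M) (hshift : ShiftInvariant X)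
    (hinf : X.Infinite) (hg : g ∈ X) (l : ℕ) (κ : Type*) [Finite κ] :
    ∃ P : ℤ, ∀ y : X, (∀ k, ¬ OccursAt g (Ico 0 l) y.1 k) →
      (∀ t, 0 < t → t ≤ P → ¬ Function.Periodic y.1 t) →
      ∃ Φ : Equiv.Perm (Option κ) →* (X ≃ₜ X),
        (∀ π (x x' : X) (t : ℤ), x'.1 = translate t x.1 → (Φ π x').1 = translate t (Φ π x).1) ∧
        ∀ π, π none ≠ none → ∃ k, OccursAt g (Ico 0 l) (Φ π y).1 k := by
  obtain ⟨c, hc, hvariants⟩ := hM.exists_isVariantFamily (κ := κ) (l := l) hshift hinf hg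
  obtain ⟨P, hP⟩ := exists_window_without_short_period A (2 * r) (3 * c + 1)
  refine ⟨P, fun y hyg hyP => ?_⟩
  obtain ⟨i, j, hij, hper⟩ := hP y.1 hyP
  set K := (j - i + 1) / 2
  set z := translate (-(i + K)) y.1
  have hzg : ∀ k, ¬ OccursAt g (Ico 0 l) z k := fun k hk => hyg _ (occursAt_translate.1 hk)
  have hzper : ∀ t, 0 < t → t ≤ K + 3 * c → ¬ HasPeriodOn z t (-K) K := fun t ht htK h =>
    hper t ht (by lia) (h.of_translate.mono (by lia) (by lia))
  obtain ⟨l₀, x, hx⟩ := hvariants z (hshift _ y.2 _) hzg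
  have hmarker := hx.isMarkerFamily hzg (by lia) hzper
  have hmaps := hmarker.mapsTo_permuteBlocks hX hshift
    (Option.rec (hshift _ y.2 _) hx.mem) (fun n hn m _ _ => by grind)
  refine ⟨hmarker.autHom (finite_Icc _ _) hmaps, fun π u u' t hu => ?_, fun π hπ => ?_⟩
  · exact (congrArg _ hu).trans (hmarker.permuteBlocks_translate π t u.1)
  · refine hx.exists_occursAt_permuteBlocks hmarker (k := i + K) (fun n _ => ?_) hπ
    simp only [z, translate_apply, sub_neg_eq_add, add_comm]

end MarkerConstruction

/-! ### Finite-index subgroups and invariant sets -/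

theorem exists_mem_smul_ne {G P α : Type*} [Group G] [Group P] [MulAction P α]
    [MulAction.IsPretransitive P α] (Φ : P →* G) {K : Subgroup G} [K.FiniteIndex]
    (hK : K.index < Nat.card α) (a : α) : ∃ π : P, Φ π ∈ K ∧ π • a ≠ a := by
  by_contra! h
  have hstab : K.comap Φ ≤ MulAction.stabilizer P a := h
  have : (K.comap Φ).FiniteIndex := ⟨by
    rw [Subgroup.index_comap]
    exact (K.instFiniteIndex_subgroupOf Φ.range).index_ne_zero⟩
  refine hK.not_ge ?_
  calc Nat.card α = (MulAction.stabilizer P a).index :=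
        (MulAction.index_stabilizer_of_transitive P a).symm
    _ ≤ (K.comap Φ).index := Subgroup.index_antitone hstab
    _ = K.relIndex Φ.range := K.index_comap Φ
    _ ≤ K.relIndex ⊤ := Subgroup.relIndex_le_of_le_right le_top
        (by rw [Subgroup.relIndex_top_right]; exact Subgroup.FiniteIndex.index_ne_zero)
    _ = K.index := K.relIndex_top_right

section InvariantSets

variable {Y : Type*} [TopologicalSpace Y] {σ : Y ≃ₜ Y} {Z : Set Y} {m : ℕ}

lemma IsTopMixing.exists_mem_image_inter_nonempty (hσ : IsTopMixing σ) {H : Subgroup (Y ≃ₜ Y)}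
    (hm : 0 < m) (hmH : σ ^ m ∈ H) {U V : Set Y} (hU : IsOpen U) (hV : IsOpen V)
    (hUne : U.Nonempty) (hVne : V.Nonempty) : ∃ g : H, (H.subtype g '' U ∩ V).Nonempty := by
  obtain ⟨N, hN⟩ := hσ U V hU hV hUne hVne
  refine ⟨⟨σ ^ m, hmH⟩ ^ N, ?_⟩
  rw [map_pow, Subgroup.subtype_apply, ← pow_mul]
  exact hN _ (Nat.le_mul_of_pos_left N hm)

lemma finite_orbit_of_le_centralizer {H : Subgroup (Y ≃ₜ Y)}
    (hH : H ≤ Subgroup.centralizer {σ}) {q : ℕ} (hfin : {y | (σ ^ q) y = y}.Finite) {y : Y}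
    (hy : (σ ^ q) y = y) : (range fun g : H => H.subtype g y).Finite := by
  refine hfin.subset (range_subset_iff.2 fun g => ?_)
  have hgσ : Commute σ g := (Subgroup.mem_centralizer_singleton_iff.1 (hH g.2)).symm
  calc (σ ^ q) (g.1 y) = g.1 ((σ ^ q) y) := DFunLike.congr_fun (hgσ.pow_left q).eq y
    _ = g.1 y := by rw [hy]

lemma interior_eq_empty_of_transitive {G : Type*} [Group G] {T : G →* (Y ≃ₜ Y)}
    (htrans : ∀ U V : Set Y, IsOpen U → IsOpen V → U.Nonempty → V.Nonempty →
      ∃ g : G, (T g '' U ∩ V).Nonempty)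
    (hZ : IsClosed Z) (hinv : ∀ g, T g '' Z = Z) (hne : Z ≠ univ) : interior Z = ∅ := by
  by_contra! hne_int
  obtain ⟨g, _, ⟨y, hy, rfl⟩, hyZ⟩ :=
    htrans _ _ isOpen_interior hZ.isOpen_compl hne_int (nonempty_compl.2 hne)
  exact hyZ ((hinv g).subset (mem_image_of_mem _ (interior_subset hy)))

/-- The orbit of `Z` under `σ` is the union of the nowhere dense sets `σ ^ i '' Z`, `0 ≤ i < m`. -/
theorem exists_isOpen_forall_zpow_apply_notMem [Nonempty Y] {H : Subgroup (Y ≃ₜ Y)}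
    (hZ : IsClosed Z) (hempty : interior Z = ∅) (hinv : ∀ g : H, H.subtype g '' Z = Z)
    (hm : 0 < m) (hmH : σ ^ m ∈ H) :
    ∃ U : Set Y, IsOpen U ∧ U.Nonempty ∧ ∀ y ∈ Z, ∀ k : ℤ, (σ ^ k) y ∉ U := by
  have hclosed : ∀ i : ℤ, IsClosed ((σ ^ i) '' Z) := fun i => (σ ^ i).isClosed_image.2 hZ
  have hdense : ∀ i : ℤ, Dense ((σ ^ i) '' Z)ᶜ := fun i => by
    rw [← interior_eq_empty_iff_dense_compl, ← Homeomorph.image_interior, hempty, image_empty]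
  refine ⟨⋂₀ ((fun i : ℤ => ((σ ^ i) '' Z)ᶜ) '' Ico 0 m), ?_, ?_, fun y hy k hk => ?_⟩
  · exact ((finite_Ico _ _).image _).isOpen_sInter
      (forall_mem_image.2 fun i _ => (hclosed i).isOpen_compl)
  · exact (((finite_Ico _ _).image _).dense_sInter
      (forall_mem_image.2 fun i _ => (hclosed i).isOpen_compl)
      (forall_mem_image.2 fun i _ => hdense i)).nonempty
  · have hkm : k % m ∈ Ico (0 : ℤ) m :=
      ⟨Int.emod_nonneg k (by lia), Int.emod_lt_of_pos k (by lia)⟩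
    have hyZ : ((σ ^ m) ^ (k / m)) y ∈ Z :=
      (hinv (⟨_, hmH⟩ ^ (k / m))).subset (mem_image_of_mem _ hy)
    have hσk : σ ^ (k % m) * (σ ^ m) ^ (k / m) = σ ^ k := by
      rw [← zpow_natCast, ← zpow_mul, ← zpow_add, Int.emod_add_mul_ediv]
    exact hk _ (mem_image_of_mem _ hkm) ⟨_, hyZ, DFunLike.congr_fun hσk y⟩

end InvariantSets

/-! ### Automorphisms creating a given block -/

theorem IsShiftOn.exists_perm_hom_zpow_apply_mem {A : Type*} [Finite A] [TopologicalSpace A]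
    [DiscreteTopology A] {X : Set (ℤ → A)} {σ : X ≃ₜ X} {r M : ℕ} (hσ : IsShiftOn σ)
    (hX : DeterminedByBlocks X r) (hM : GluesAcross X M) (hinf : X.Infinite) {U : Set X}
    (hU : IsOpen U) (hUne : U.Nonempty) (κ : Type*) [Finite κ] :
    ∃ S : Set X, S.Finite ∧ ∀ y ∉ S, (∀ k : ℤ, (σ ^ k) y ∉ U) →
      ∃ Φ : Equiv.Perm (Option κ) →* Subgroup.centralizer {σ},
        ∀ π, π none ≠ none → ∃ k : ℤ, (σ ^ k) ((Φ π).1 y) ∈ U := by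
  obtain ⟨a, ha⟩ := hUne
  obtain ⟨n, hn⟩ := exists_Ico_eqOn_imp_mem hU ha
  have hmem : ∀ (y : X) (k : ℤ), OccursAt (translate n a.1) (Ico 0 (2 * n : ℕ)) y.1 k →
      (σ ^ (k + n)) y ∈ U := fun y k hk => hn _ fun i ⟨hi, hin⟩ => by
    have h := hk (i + n) ⟨by lia, by lia⟩
    rw [translate_apply, add_sub_cancel_right] at h
    rw [hσ.zpow_apply, translate_apply, ← h]
    exact congrArg y.1 (by ring)
  obtain ⟨P, hP⟩ := exists_perm_hom_occursAt hX hM hσ.shiftInvariant hinf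
    (hσ.shiftInvariant _ a.2 n) (2 * n) κ
  refine ⟨⋃ q ∈ Icc 1 P.toNat, {x | (σ ^ q) x = x},
    (finite_Icc _ _).biUnion fun q hq => hσ.finite_setOf_pow_apply_eq_self hq.1,
    fun y hyS hyU => ?_⟩
  obtain ⟨Φ, hΦ, hΦU⟩ := hP y (fun k hk => hyU _ (hmem y k hk)) fun t ht htP hper =>
    hyS (mem_biUnion (x := t.toNat) ⟨by lia, by lia⟩ (by
      change (σ ^ t.toNat) y = y
      rw [← zpow_natCast, Int.toNat_of_nonneg ht.le]
      exact hσ.zpow_apply_eq_self_iff.2 hper))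
  have hcentral : ∀ π, Φ π ∈ Subgroup.centralizer {σ} := fun π =>
    Subgroup.mem_centralizer_singleton_iff.2 <| Homeomorph.ext fun x => Subtype.ext <|
      (hΦ π x (σ x) (-1) (hσ x)).trans (hσ (Φ π x)).symm
  exact ⟨Φ.codRestrict _ hcentral, fun π hπ =>
    (hΦU π hπ).imp' (· + (n : ℤ)) fun k hk => hmem _ k hk⟩

/-- For an infinite topologically mixing shift of finite type `(X,σ)`,
the action on `X` of any finite-index subgroup `H` of the automorphism group
`Aut(X,σ)` (the centralizer of `σ` in the group of self-homeomorphisms of `X`)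
is chaotic almost minimal. -/
theorem statement19 {A : Type*} [Fintype A] [TopologicalSpace A] [DiscreteTopology A]
    (F : Set (List A)) (hF : F.Finite)
    (X : Set (ℤ → A)) (hXdef : X = {x | ∀ w ∈ F, ¬ occursIn w x})
    (hXne : X.Nonempty) (hXinf : X.Infinite)
    (hXinv : ∀ x, x ∈ X ↔ shiftHomeo A x ∈ X)
    (σX : X ≃ₜ X) (hσX : σX = restrictHomeo (shiftHomeo A) X hXinv)
    (hmix : ∀ U V : Set X, IsOpen U → IsOpen V → U.Nonempty → V.Nonempty →
      ∃ N : ℕ, ∀ n : ℕ, N ≤ n → ((σX ^ n) '' U ∩ V).Nonempty)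
    (H : Subgroup (X ≃ₜ X)) (hH : H ≤ Subgroup.centralizer {σX})
    (hfin : (H.subgroupOf (Subgroup.centralizer {σX})).FiniteIndex) :
    IsCAM H.subtype := by
  set K := H.subgroupOf (Subgroup.centralizer {σX})
  have hσ : IsShiftOn σX := hσX ▸ isShiftOn_restrictHomeo hXinv
  obtain ⟨r, hX⟩ : ∃ r, DeterminedByBlocks X r := hXdef ▸ exists_determinedByBlocks hF
  obtain ⟨M, hM⟩ := hσ.exists_gluesAcross hmix hX
  obtain ⟨m, hm, -, hmH⟩ := Subgroup.exists_pow_mem_of_relIndex_ne_zero hfin.index_ne_zero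
    (Subgroup.mem_centralizer_singleton_iff.2 (rfl : σX * σX = σX * σX))
  have htrans : ∀ U V : Set X, IsOpen U → IsOpen V → U.Nonempty → V.Nonempty →
      ∃ g : H, (H.subtype g '' U ∩ V).Nonempty := fun U V =>
    IsTopMixing.exists_mem_image_inter_nonempty hmix hm hmH.1
  refine ⟨H.subtype_injective, htrans, (hσ.dense_setOf_pow_apply_eq_self hX hM).mono ?_,
    fun Y hY hYinv hYne => ?_⟩
  · rintro x ⟨q, hq, hx⟩
    exact finite_orbit_of_le_centralizer hH (hσ.finite_setOf_pow_apply_eq_self hq) hx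
  have : Nonempty X := hXne.to_subtype
  obtain ⟨U, hU, hUne, hYU⟩ := exists_isOpen_forall_zpow_apply_notMem hY
    (interior_eq_empty_of_transitive htrans hY hYinv hYne) hYinv hm hmH.1
  obtain ⟨S, hS, hSU⟩ := hσ.exists_perm_hom_zpow_apply_mem hX hM hXinf hU hUne (Fin K.index)
  refine hS.subset fun y hy => by_contra fun hyS => ?_
  obtain ⟨Φ, hΦU⟩ := hSU y hyS (hYU y hy)
  obtain ⟨π, hπH, hπ⟩ := exists_mem_smul_ne (K := K) (α := Option (Fin K.index)) Φ (by simp) none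
  obtain ⟨k, hk⟩ := hΦU π hπ
  exact hYU _ ((hYinv ⟨_, hπH⟩).subset (mem_image_of_mem _ hy)) k hk
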